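/- arXiv:2407.03485 — 4 statements merged into one kernel-verified Lean document; each statement's English description precedes it below -/
import Mathlib

section
/- Consider the sequences generated by Algorithm 1. Then for every k ≥ 0, ‖x_{k+1} − w̃_k‖ ≥ ((1 − σ²)/2) · max{λ_k‖v_k‖, ‖w̃_k − y_k‖}. -/
open scoped RealInnerProductSpace
open Filter Topology

variable {H : Type*} [NormedAddCommGroup H] [InnerProductSpace ℝ H] [CompleteSpace H]

/-- A set-valued operator is monotone. -/
def IsMonotoneOp (T : H → Set H) : Prop :=
  ∀ x y u v, u ∈ T x → v ∈ T y → 0 ≤ ⟪u - v, x - y⟫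

/-- A set-valued operator is maximal monotone. -/
def IsMaxMonotoneOp (T : H → Set H) : Prop :=
  IsMonotoneOp T ∧ ∀ x v, (∀ y u, u ∈ T y → 0 ≤ ⟪u - v, y - x⟫) → v ∈ T x

/-- The ε-enlargement of a set-valued operator. -/
def enl (T : H → Set H) (ε : ℝ) (y : H) : Set H :=
  {v | ∀ z u, u ∈ T z → ⟪u - v, z - y⟫ ≥ -ε}

/-! The error criterion, once its square is expanded, says that `w` lies on the wrong side of the
hyperplane bounding `{z | ⟪z - y, v⟫ ≤ ε}`, with a violation of at least
`(1 - σ ^ 2) / 2 * (‖lam • v‖ ^ 2 + ‖w - y‖ ^ 2)` when measured along `lam • v`. By Cauchy–Schwarz,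
any point `z` of the half-space then satisfies
`(1 - σ ^ 2) / 2 * (‖lam • v‖ ^ 2 + ‖w - y‖ ^ 2) ≤ ‖z - w‖ * ‖lam • v‖`. The sum of squares is at
least the square of the larger norm and `‖lam • v‖` is at most that norm, so one factor cancels. -/

theorem mul_max_le_of_mul_sq_add_sq_le {R : Type*} [CommRing R] [LinearOrder R]
    [IsStrictOrderedRing R] {s a b d : R} (hs : 0 ≤ s) (ha : 0 ≤ a) (hd : 0 ≤ d)
    (h : s * (a ^ 2 + b ^ 2) ≤ d * a) : s * max a b ≤ d := by
  have hmax : 0 ≤ max a b := le_max_of_le_left ha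
  have max_sq_le : max a b ^ 2 ≤ a ^ 2 + b ^ 2 := by
    rcases max_choice a b with hab | hab <;> rw [hab]
    · exact le_add_of_nonneg_right (sq_nonneg b)
    · exact le_add_of_nonneg_left (sq_nonneg a)
  rcases hmax.eq_or_lt with hzero | hpos
  · rwa [← hzero, mul_zero]
  · refine le_of_mul_le_mul_right ?_ hpos
    calc s * max a b * max a b = s * max a b ^ 2 := by ring
      _ ≤ s * (a ^ 2 + b ^ 2) := by gcongr
      _ ≤ d * a := h
      _ ≤ d * max a b := by gcongr; exact le_max_left a b

section InnerProductSpace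

variable {E : Type*} [NormedAddCommGroup E] [InnerProductSpace ℝ E]

theorem inner_sub_sub_le_norm_mul_norm {u w y z : E} {δ : ℝ} (hz : ⟪z - y, u⟫ ≤ δ) :
    ⟪w - y, u⟫ - δ ≤ ‖z - w‖ * ‖u‖ := by
  calc ⟪w - y, u⟫ - δ ≤ ⟪w - y, u⟫ - ⟪z - y, u⟫ := by gcongr
    _ = ⟪w - z, u⟫ := by rw [← inner_sub_left, sub_sub_sub_cancel_right]
    _ ≤ ‖w - z‖ * ‖u‖ := real_inner_le_norm _ _
    _ = ‖z - w‖ * ‖u‖ := by rw [norm_sub_rev]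

theorem mul_norm_sq_add_norm_sq_le_inner_sub {u w y : E} {σ δ : ℝ}
    (herr : ‖u + y - w‖ ^ 2 + 2 * δ ≤ σ ^ 2 * (‖u‖ ^ 2 + ‖y - w‖ ^ 2)) :
    (1 - σ ^ 2) / 2 * (‖u‖ ^ 2 + ‖w - y‖ ^ 2) ≤ ⟪w - y, u⟫ - δ := by
  have expand : ‖u + y - w‖ ^ 2 = ‖u‖ ^ 2 - 2 * ⟪w - y, u⟫ + ‖w - y‖ ^ 2 := by
    rw [← sub_sub_eq_add_sub, norm_sub_sq_real, real_inner_comm]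
  rw [expand, norm_sub_rev y w] at herr
  linarith

theorem stmt5_general {σ lam ε : ℝ} {v w y z : E} (hσ : σ ^ 2 ≤ 1) (hlam : 0 ≤ lam)
    (herr : ‖lam • v + y - w‖ ^ 2 + 2 * lam * ε ≤ σ ^ 2 * (‖lam • v‖ ^ 2 + ‖y - w‖ ^ 2))
    (hz : ⟪z - y, v⟫ ≤ ε) :
    (1 - σ ^ 2) / 2 * max (lam * ‖v‖) ‖w - y‖ ≤ ‖z - w‖ := by
  have hz_smul : ⟪z - y, lam • v⟫ ≤ lam * ε := by
    rw [real_inner_smul_right]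
    gcongr
  have hσ_half : 0 ≤ (1 - σ ^ 2) / 2 := by linarith
  have separation : (1 - σ ^ 2) / 2 * (‖lam • v‖ ^ 2 + ‖w - y‖ ^ 2) ≤ ‖z - w‖ * ‖lam • v‖ := by
    rw [mul_assoc] at herr
    exact (mul_norm_sq_add_norm_sq_le_inner_sub herr).trans
      (inner_sub_sub_le_norm_mul_norm hz_smul)
  rw [← norm_smul_of_nonneg hlam]
  exact mul_max_le_of_mul_sq_add_sq_le hσ_half (norm_nonneg _) (norm_nonneg _) separation

end InnerProductSpace

/-- Proposition 3.1(c): ‖x_{k+1} − w̃_k‖ ≥ ((1−σ²)/2)·max{λ_k‖v_k‖, ‖w̃_k − y_k‖}. -/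
theorem stmt5
    (T : H → Set H) (hT : IsMaxMonotoneOp T)
    (hS : {z : H | (0 : H) ∈ T z}.Nonempty)
    (σ : ℝ) (hσ0 : 0 ≤ σ) (hσ1 : σ < 1)
    (α β lam ε : ℕ → ℝ)
    (hα : ∀ k, 0 ≤ α k) (hβ : ∀ k, 0 ≤ β k)
    (hlam : ∀ k, 0 < lam k) (hε : ∀ k, 0 ≤ ε k)
    (x w wt y v : ℕ → H)
    (hw : ∀ k, w k = x k + α k • (x k - x (k - 1)))
    (hwt : ∀ k, wt k = w k + β k • (w k - x 0))
    (hincl : ∀ k, v k ∈ enl T (ε k) (y k))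
    (herr : ∀ k, ‖lam k • v k + y k - wt k‖ ^ 2 + 2 * lam k * ε k ≤
      σ ^ 2 * (‖lam k • v k‖ ^ 2 + ‖y k - wt k‖ ^ 2))
    (hmem : ∀ k, ⟪x (k + 1) - y k, v k⟫ ≤ ε k ∧ ⟪x (k + 1) - x k, x 0 - x k⟫ ≤ 0)
    (hproj : ∀ k, ∀ z : H, ⟪z - y k, v k⟫ ≤ ε k → ⟪z - x k, x 0 - x k⟫ ≤ 0 →
      ‖x (k + 1) - x 0‖ ≤ ‖z - x 0‖) :
    ∀ k : ℕ, (1 - σ ^ 2) / 2 * max (lam k * ‖v k‖) ‖wt k - y k‖ ≤ ‖x (k + 1) - wt k‖ := by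
  exact fun k =>
    stmt5_general (pow_le_one₀ hσ0 hσ1.le) (hlam k).le (herr k) (hmem k).1
end

section
/- Consider the sequences generated by Algorithm 1, suppose Assumption 3.2 holds and suppose there exists λ̲ > 0 with λ_k ≥ λ̲ for all k ≥ 0. Then every weak sequential cluster point of (x_k) belongs to S := {x : 0 ∈ T(x)}: if a subsequence (x_{k_j}) converges weakly to some x̄ ∈ H (i.e. ⟨x_{k_j}, h⟩ → ⟨x̄, h⟩ for all h ∈ H), then 0 ∈ T(x̄). -/
open scoped RealInnerProductSpace
open Filter Topology

variable {H : Type*} [NormedAddCommGroup H] [InnerProductSpace ℝ H] [CompleteSpace H]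

/-!
The inequality `⟪x (k + 1) - x k, x 0 - x k⟫ ≤ 0` says that the angle at `x k` is not acute, so
`‖x (k + 1) - x k‖ ^ 2 + ‖x k - x 0‖ ^ 2 ≤ ‖x (k + 1) - x 0‖ ^ 2`. Hence `‖x k - x 0‖` is monotone,
and the weakly convergent subsequence, being bounded, bounds the whole sequence. Telescoping gives
`x (k + 1) - x k → 0`, and therefore `wt k - x k → 0` for the extrapolated points. Because
`⟪x (k + 1) - y k, v k⟫ ≤ ε k`, the relative error criterion bounds `‖lam k • v k‖` and
`‖y k - wt k‖` by a multiple of `‖x (k + 1) - wt k‖`. Thus `v k → 0` strongly, `ε k → 0`, and `y k`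
follows `x k` to its weak cluster point; the graph of the enlargement is closed under such limits.
-/

variable {ι E : Type*} [NormedAddCommGroup E] [InnerProductSpace ℝ E] {l : Filter ι}

theorem tendsto_zero_of_norm_sq_le {F : Type*} [SeminormedAddCommGroup F] {f : ι → F} {g : ι → ℝ}
    (hfg : ∀ i, ‖f i‖ ^ 2 ≤ g i) (hg : Tendsto g l (𝓝 0)) : Tendsto f l (𝓝 0) :=
  squeeze_zero_norm (fun i => Real.le_sqrt_of_sq_le (hfg i)) (by simpa using hg.sqrt)

theorem tendsto_zero_of_tendsto_smul {F : Type*} [SeminormedAddCommGroup F] [NormedSpace ℝ F]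
    {c : ℝ} {lam : ι → ℝ} {v : ι → F} (hc : 0 < c) (hlam : ∀ i, c ≤ lam i)
    (hv : Tendsto (fun i => lam i • v i) l (𝓝 0)) : Tendsto v l (𝓝 0) := by
  refine squeeze_zero_norm (fun i => (le_div_iff₀' hc).2 ?_)
    (by simpa using hv.norm.div_const c)
  rw [norm_smul]
  gcongr
  exact (hlam i).trans (le_abs_self _)

/-- Weak convergence `x i ⇀ x₀` along `l`, tested against inner products. In a Hilbert space this is
convergence in `WeakSpace ℝ E`; in an incomplete space it tests fewer functionals. -/
def TendstoWeakly (x : ι → E) (l : Filter ι) (x₀ : E) : Prop :=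
  ∀ h : E, Tendsto (fun i => ⟪x i, h⟫) l (𝓝 ⟪x₀, h⟫)

namespace TendstoWeakly

theorem exists_norm_le [CompleteSpace E] {x : ℕ → E} {x₀ : E} (hx : TendstoWeakly x atTop x₀) :
    ∃ C, ∀ n, ‖x n‖ ≤ C := by
  have pointwise_bounded (h : E) : ∃ C, ∀ n, ‖innerSL ℝ (x n) h‖ ≤ C := by
    obtain ⟨C, hC⟩ := (hx h).norm.bddAbove_range
    exact ⟨C, fun n => hC ⟨n, rfl⟩⟩
  simpa only [innerSL_apply_norm] using banach_steinhaus pointwise_bounded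

theorem of_sub_tendsto_zero {x y : ι → E} {x₀ : E} (hx : TendstoWeakly x l x₀)
    (hyx : Tendsto (fun i => y i - x i) l (𝓝 0)) : TendstoWeakly y l x₀ := fun h => by
  simpa [← inner_add_left] using (hyx.inner (tendsto_const_nhds (x := h))).add (hx h)

theorem tendsto_inner {v y : ι → E} {v₀ y₀ : E} (hy : TendstoWeakly y l y₀)
    (hy_bdd : IsBoundedUnder (· ≤ ·) l (norm ∘ y)) (hv : Tendsto v l (𝓝 v₀)) :
    Tendsto (fun i => ⟪v i, y i⟫) l (𝓝 ⟪v₀, y₀⟫) := by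
  have hsub : Tendsto (fun i => v i - v₀) l (𝓝 0) := by simpa using hv.sub_const v₀
  have herr : Tendsto (fun i => ⟪v i - v₀, y i⟫) l (𝓝 0) :=
    hsub.op_zero_isBoundedUnder_le hy_bdd (fun a b => ⟪a, b⟫) norm_inner_le_norm
  simpa [inner_sub_left, real_inner_comm] using herr.add (hy v₀)

end TendstoWeakly

section Enlargement

variable {T : E → Set E}

theorem IsMaxMonotoneOp.enl_zero_subset (hT : IsMaxMonotoneOp T) (x : E) : enl T 0 x ⊆ T x :=
  fun v hv => hT.2 x v fun z u hu => by simpa using hv z u hu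

theorem mem_enl_of_tendsto [l.NeBot] {ε : ι → ℝ} {y v : ι → E} {ε₀ : ℝ} {y₀ v₀ : E}
    (hmem : ∀ i, v i ∈ enl T (ε i) (y i)) (hε : Tendsto ε l (𝓝 ε₀)) (hv : Tendsto v l (𝓝 v₀))
    (hy : TendstoWeakly y l y₀) (hy_bdd : IsBoundedUnder (· ≤ ·) l (norm ∘ y)) :
    v₀ ∈ enl T ε₀ y₀ := fun z u hu => by
  have huv : Tendsto (fun i => u - v i) l (𝓝 (u - v₀)) := hv.const_sub u
  have hlim : Tendsto (fun i => ⟪u - v i, z - y i⟫) l (𝓝 ⟪u - v₀, z - y₀⟫) := by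
    simpa only [inner_sub_right] using
      (huv.inner tendsto_const_nhds).sub (hy.tendsto_inner hy_bdd huv)
  exact le_of_tendsto_of_tendsto' hε.neg hlim fun i => hmem i z u hu

end Enlargement

section AnchoredSequence

theorem norm_sub_sq_add_norm_sub_sq_le {a b z : E} (h : ⟪z - b, a - b⟫ ≤ 0) :
    ‖z - b‖ ^ 2 + ‖b - a‖ ^ 2 ≤ ‖z - a‖ ^ 2 := by
  rw [← sub_sub_sub_cancel_right z a b, norm_sub_sq_real (z - b), norm_sub_rev b a]
  linarith

variable {a : E} {x : ℕ → E}

theorem monotone_norm_sub_of_inner_nonpos (hx : ∀ k, ⟪x (k + 1) - x k, a - x k⟫ ≤ 0) :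
    Monotone fun k => ‖x k - a‖ :=
  monotone_nat_of_le_succ fun k => (sq_le_sq₀ (norm_nonneg _) (norm_nonneg _)).1
    ((le_add_of_nonneg_left (sq_nonneg _)).trans (norm_sub_sq_add_norm_sub_sq_le (hx k)))

theorem bddAbove_norm_sub_of_tendstoWeakly [CompleteSpace E]
    (hx : ∀ k, ⟪x (k + 1) - x k, a - x k⟫ ≤ 0) {φ : ℕ → ℕ} (hφ : Tendsto φ atTop atTop) {x₀ : E}
    (hweak : TendstoWeakly (x ∘ φ) atTop x₀) : BddAbove (Set.range fun k => ‖x k - a‖) := by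
  obtain ⟨C, hC⟩ := hweak.exists_norm_le
  refine ⟨C + ‖a‖, Set.forall_mem_range.2 fun k => ?_⟩
  obtain ⟨j, hj⟩ := (hφ.eventually_ge_atTop k).exists
  calc ‖x k - a‖ ≤ ‖x (φ j) - a‖ := monotone_norm_sub_of_inner_nonpos hx hj
    _ ≤ ‖x (φ j)‖ + ‖a‖ := norm_sub_le _ _
    _ ≤ C + ‖a‖ := by gcongr; exact hC j

theorem tendsto_succ_sub_of_inner_nonpos (hx : ∀ k, ⟪x (k + 1) - x k, a - x k⟫ ≤ 0)
    (hbdd : BddAbove (Set.range fun k => ‖x k - a‖)) :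
    Tendsto (fun k => x (k + 1) - x k) atTop (𝓝 0) := by
  have hlim := (tendsto_atTop_ciSup (monotone_norm_sub_of_inner_nonpos hx) hbdd).pow 2
  have htelescope := (hlim.comp (tendsto_add_atTop_nat 1)).sub hlim
  rw [sub_self] at htelescope
  exact tendsto_zero_of_norm_sq_le
    (fun k => le_sub_iff_add_le.2 (norm_sub_sq_add_norm_sub_sq_le (hx k))) htelescope

end AnchoredSequence

theorem tendsto_extrapolation_sub {F : Type*} [SeminormedAddCommGroup F] [NormedSpace ℝ F]
    {α β : ι → ℝ} {x p w wt : ι → F} {a : F}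
    (hw : ∀ i, w i = x i + α i • (x i - p i)) (hwt : ∀ i, wt i = w i + β i • (w i - a))
    (hα : IsBoundedUnder (· ≤ ·) l (norm ∘ α)) (hβ : Tendsto β l (𝓝 0))
    (hxp : Tendsto (fun i => x i - p i) l (𝓝 0))
    (hxa : IsBoundedUnder (· ≤ ·) l (norm ∘ fun i => x i - a)) :
    Tendsto (fun i => wt i - x i) l (𝓝 0) := by
  have hwx : Tendsto (fun i => w i - x i) l (𝓝 0) := by
    simpa [hw] using hα.smul_tendsto_zero hxp
  have hsplit (i : ι) : wt i - x i = (w i - x i) + (β i • (w i - x i) + β i • (x i - a)) := by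
    rw [hwt]; module
  simpa [hsplit] using hwx.add ((hβ.smul hwx).add (hβ.zero_smul_isBoundedUnder_le hxa))

/-- The relative error criterion of the hybrid proximal extragradient method, under which `(y, v)`
with `v ∈ enl T ε y` is accepted as an approximate proximal step from `w` with step size `lam`.
The exact step is `y = w - lam • v`, `ε = 0`. -/
def RelativeErrorCriterion (σ lam ε : ℝ) (w y v : E) : Prop :=
  ‖lam • v + y - w‖ ^ 2 + 2 * lam * ε ≤ σ ^ 2 * (‖lam • v‖ ^ 2 + ‖y - w‖ ^ 2)

namespace RelativeErrorCriterion

section Step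

variable {σ lam ε : ℝ} {w y v : E}

theorem two_mul_mul_le (h : RelativeErrorCriterion σ lam ε w y v) :
    2 * lam * ε ≤ σ ^ 2 * (‖lam • v‖ ^ 2 + ‖y - w‖ ^ 2) :=
  (le_add_of_nonneg_left (sq_nonneg _)).trans h

theorem one_sub_sq_mul_le_inner (h : RelativeErrorCriterion σ lam ε w y v) (hlam : 0 ≤ lam) {z : E}
    (hz : ⟪z - y, v⟫ ≤ ε) :
    (1 - σ ^ 2) * (‖lam • v‖ ^ 2 + ‖y - w‖ ^ 2) ≤ 2 * ⟪w - z, lam • v⟫ := by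
  have hsq : ‖lam • v + y - w‖ ^ 2 = ‖lam • v‖ ^ 2 + 2 * ⟪y - w, lam • v⟫ + ‖y - w‖ ^ 2 := by
    rw [add_sub_assoc, norm_add_sq_real, real_inner_comm]
  have hscaled : ⟪z - y, lam • v⟫ ≤ lam * ε := by
    rw [inner_smul_right]; gcongr
  have hinner : ⟪w - z, lam • v⟫ = -⟪y - w, lam • v⟫ - ⟪z - y, lam • v⟫ := by
    simp only [inner_sub_left]; ring
  rw [RelativeErrorCriterion, hsq] at h
  linarith

theorem one_sub_sq_sq_mul_le (h : RelativeErrorCriterion σ lam ε w y v) (hσ : σ ^ 2 ≤ 1)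
    (hlam : 0 ≤ lam) {z : E} (hz : ⟪z - y, v⟫ ≤ ε) :
    (1 - σ ^ 2) ^ 2 * (‖lam • v‖ ^ 2 + ‖y - w‖ ^ 2) ≤ 4 * ‖z - w‖ ^ 2 := by
  set N := ‖lam • v‖ ^ 2 + ‖y - w‖ ^ 2
  have hN_nonneg : 0 ≤ N := by positivity
  have hlinear : (1 - σ ^ 2) * N ≤ 2 * (‖z - w‖ * ‖lam • v‖) :=
    calc (1 - σ ^ 2) * N ≤ 2 * ⟪w - z, lam • v⟫ := h.one_sub_sq_mul_le_inner hlam hz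
      _ ≤ 2 * (‖z - w‖ * ‖lam • v‖) := by
        rw [norm_sub_rev z w]; gcongr; exact real_inner_le_norm _ _
  have hsq : (1 - σ ^ 2) ^ 2 * N * N ≤ 4 * ‖z - w‖ ^ 2 * N :=
    calc (1 - σ ^ 2) ^ 2 * N * N = ((1 - σ ^ 2) * N) ^ 2 := by ring
      _ ≤ (2 * (‖z - w‖ * ‖lam • v‖)) ^ 2 :=
        pow_le_pow_left₀ (mul_nonneg (sub_nonneg.2 hσ) hN_nonneg) hlinear 2
      _ = 4 * ‖z - w‖ ^ 2 * ‖lam • v‖ ^ 2 := by ring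
      _ ≤ 4 * ‖z - w‖ ^ 2 * N := by gcongr; exact le_add_of_nonneg_right (sq_nonneg _)
  obtain hN_zero | hN_pos := hN_nonneg.eq_or_lt
  · rw [← hN_zero, mul_zero]; positivity
  · exact le_of_mul_le_mul_right hsq hN_pos

end Step

variable {σ lamlb : ℝ} {lam ε : ι → ℝ} {w y v z : ι → E}

theorem tendsto_residual (herr : ∀ i, RelativeErrorCriterion σ (lam i) (ε i) (w i) (y i) (v i))
    (hσ : σ ^ 2 < 1) (hlam : ∀ i, 0 ≤ lam i) (hz : ∀ i, ⟪z i - y i, v i⟫ ≤ ε i)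
    (hzw : Tendsto (fun i => z i - w i) l (𝓝 0)) :
    Tendsto (fun i => ‖lam i • v i‖ ^ 2 + ‖y i - w i‖ ^ 2) l (𝓝 0) := by
  have hpos : 0 < (1 - σ ^ 2) ^ 2 := pow_pos (sub_pos.2 hσ) 2
  refine squeeze_zero (fun i => by positivity)
    (fun i => (le_div_iff₀' hpos).2 ((herr i).one_sub_sq_sq_mul_le hσ.le (hlam i) (hz i))) ?_
  simpa using ((hzw.norm.pow 2).const_mul 4).div_const ((1 - σ ^ 2) ^ 2)

theorem tendsto_eps (herr : ∀ i, RelativeErrorCriterion σ (lam i) (ε i) (w i) (y i) (v i))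
    (hlamlb : 0 < lamlb) (hlam : ∀ i, lamlb ≤ lam i) (hε : ∀ i, 0 ≤ ε i)
    (hres : Tendsto (fun i => ‖lam i • v i‖ ^ 2 + ‖y i - w i‖ ^ 2) l (𝓝 0)) :
    Tendsto ε l (𝓝 0) := by
  refine squeeze_zero hε (fun i => (le_div_iff₀' (by positivity : 0 < 2 * lamlb)).2 ?_)
    (by simpa using (hres.const_mul (σ ^ 2)).div_const (2 * lamlb))
  calc 2 * lamlb * ε i ≤ 2 * lam i * ε i := by gcongr; exacts [hε i, hlam i]
    _ ≤ _ := (herr i).two_mul_mul_le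

end RelativeErrorCriterion

theorem stmt9_general [CompleteSpace E] {T : E → Set E} {σ lamlb : ℝ} {α β lam ε : ℕ → ℝ}
    {x w wt y v : ℕ → E} {φ : ℕ → ℕ} {xbar : E}
    (hσ : σ ^ 2 < 1) (hlamlb : 0 < lamlb) (hlam : ∀ k, lamlb ≤ lam k) (hε : ∀ k, 0 ≤ ε k)
    (hα : IsBoundedUnder (· ≤ ·) atTop (norm ∘ α)) (hβ : Tendsto β atTop (𝓝 0))
    (hw : ∀ k, w k = x k + α k • (x k - x (k - 1)))
    (hwt : ∀ k, wt k = w k + β k • (w k - x 0))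
    (hincl : ∀ k, v k ∈ enl T (ε k) (y k))
    (herr : ∀ k, RelativeErrorCriterion σ (lam k) (ε k) (wt k) (y k) (v k))
    (hH : ∀ k, ⟪x (k + 1) - y k, v k⟫ ≤ ε k) (hW : ∀ k, ⟪x (k + 1) - x k, x 0 - x k⟫ ≤ 0)
    (hφ : Tendsto φ atTop atTop) (hweak : TendstoWeakly (x ∘ φ) atTop xbar) :
    0 ∈ enl T 0 xbar := by
  have hbdd := bddAbove_norm_sub_of_tendstoWeakly hW hφ hweak
  have hstep : Tendsto (fun k => x (k + 1) - x k) atTop (𝓝 0) :=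
    tendsto_succ_sub_of_inner_nonpos hW hbdd
  have hstep_prev : Tendsto (fun k => x k - x (k - 1)) atTop (𝓝 0) :=
    (tendsto_add_atTop_iff_nat 1).1 hstep
  have hwtx : Tendsto (fun k => wt k - x k) atTop (𝓝 0) :=
    tendsto_extrapolation_sub hw hwt hα hβ hstep_prev hbdd.isBoundedUnder_of_range
  have hres := RelativeErrorCriterion.tendsto_residual herr hσ
    (fun k => hlamlb.le.trans (hlam k)) hH (by simpa using hstep.sub hwtx)
  have hv : Tendsto v atTop (𝓝 0) := tendsto_zero_of_tendsto_smul hlamlb hlam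
    (tendsto_zero_of_norm_sq_le (fun k => le_add_of_nonneg_right (sq_nonneg _)) hres)
  have hywt : Tendsto (fun k => y k - wt k) atTop (𝓝 0) :=
    tendsto_zero_of_norm_sq_le (fun k => le_add_of_nonneg_left (sq_nonneg _)) hres
  have hyx : Tendsto (fun k => y k - x k) atTop (𝓝 0) := by simpa using hywt.add hwtx
  have hy_weak : TendstoWeakly (y ∘ φ) atTop xbar := hweak.of_sub_tendsto_zero (hyx.comp hφ)
  have hε_lim : Tendsto ε atTop (𝓝 0) :=
    RelativeErrorCriterion.tendsto_eps herr hlamlb hlam hε hres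
  exact mem_enl_of_tendsto (fun j => hincl (φ j)) (hε_lim.comp hφ) (hv.comp hφ) hy_weak
    (isBoundedUnder_of hy_weak.exists_norm_le)

/-- Corollary 3.4: every weak sequential cluster point of (x_k) is a zero of T. -/
theorem stmt9
    (T : H → Set H) (hT : IsMaxMonotoneOp T)
    (hS : {z : H | (0 : H) ∈ T z}.Nonempty)
    (σ : ℝ) (hσ0 : 0 ≤ σ) (hσ1 : σ < 1)
    (α β lam ε : ℕ → ℝ)
    (hα : ∀ k, 0 ≤ α k) (hβ : ∀ k, 0 ≤ β k)
    (hlam : ∀ k, 0 < lam k) (hε : ∀ k, 0 ≤ ε k)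
    (x w wt y v : ℕ → H)
    (hw : ∀ k, w k = x k + α k • (x k - x (k - 1)))
    (hwt : ∀ k, wt k = w k + β k • (w k - x 0))
    (hincl : ∀ k, v k ∈ enl T (ε k) (y k))
    (herr : ∀ k, ‖lam k • v k + y k - wt k‖ ^ 2 + 2 * lam k * ε k ≤
      σ ^ 2 * (‖lam k • v k‖ ^ 2 + ‖y k - wt k‖ ^ 2))
    (hmem : ∀ k, ⟪x (k + 1) - y k, v k⟫ ≤ ε k ∧ ⟪x (k + 1) - x k, x 0 - x k⟫ ≤ 0)
    (hproj : ∀ k, ∀ z : H, ⟪z - y k, v k⟫ ≤ ε k → ⟪z - x k, x 0 - x k⟫ ≤ 0 →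
      ‖x (k + 1) - x 0‖ ≤ ‖z - x 0‖)
    (habdd : BddAbove (Set.range α)) (hbbdd : BddAbove (Set.range β))
    (hsum : Summable fun k => β k ^ 2)
    (lamlb : ℝ) (hlamlb : 0 < lamlb) (hlam_lb : ∀ k, lamlb ≤ lam k)
    (φ : ℕ → ℕ) (hφ : StrictMono φ) (xbar : H)
    (hweak : ∀ h : H, Tendsto (fun j => ⟪x (φ j), h⟫) atTop (𝓝 ⟪xbar, h⟫)) :
    (0 : H) ∈ T xbar := by
  have hα_bdd : IsBoundedUnder (· ≤ ·) atTop (norm ∘ α) := by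
    simpa only [Function.comp_def, Real.norm_of_nonneg (hα _)] using habdd.isBoundedUnder_of_range
  have hβ_lim : Tendsto β atTop (𝓝 0) :=
    tendsto_zero_of_norm_sq_le (fun k => (sq_abs (β k)).le) hsum.tendsto_atTop_zero
  exact hT.enl_zero_subset xbar <| stmt9_general ((sq_lt_one_iff₀ hσ0).2 hσ1) hlamlb hlam_lb hε
    hα_bdd hβ_lim hw hwt hincl herr (fun k => (hmem k).1) (fun k => (hmem k).2)
    hφ.tendsto_atTop hweak
end

section
/- (Strong convergence of Algorithm 2, the inertial Korpelevich extragradient method.) Assume the solution set S := {x ∈ C : ⟨F(x), z − x⟩ ≥ 0 for all z ∈ C} is nonempty and Assumption 3.2 holds on (α_k), (β_k). Consider the sequences generated by Algorithm 2 and let x* be the point of S satisfying ‖x* − x₀‖ ≤ ‖z − x₀‖ for all z ∈ S (the orthogonal projection of x₀ onto S; S is closed and convex). Then (x_k) and (y_k) converge strongly to x*. -/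
open scoped RealInnerProductSpace
open Filter Topology

variable {H : Type*} [NormedAddCommGroup H] [InnerProductSpace ℝ H] [CompleteSpace H]

/-!
The cutting half-spaces `H_k` contain every solution of the variational inequality, so the nearest
solution `x*` stays in all `H_k ∩ W_k`. Hence `‖x_k - x₀‖` increases and is bounded by
`‖x* - x₀‖`, which forces `x_{k+1} - x_k → 0`, and with it `w̃_k - x_k → 0`. As `x_{k+1} ∈ H_k`
bounds `‖w̃_k - y_k‖` by a multiple of `‖w̃_k - x_{k+1}‖`, also `y_k - x_k → 0`, so by monotonicity
(Minty) every weak limit point `p` of `(x_k)` is a solution. Then `‖x* - x₀‖ ≤ ‖p - x₀‖`, and since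
`x* ∈ W_k` reads `‖x* - x_k‖² + ‖x_k - x₀‖² ≤ ‖x* - x₀‖²`, weak convergence to `p` turns into
strong convergence to `x*`.
-/

section Normed

variable {ι E : Type*} [NormedAddCommGroup E] {l : Filter ι}

theorem tendsto_zero_of_norm_sq_tendsto_zero {f : ι → E}
    (h : Tendsto (fun i => ‖f i‖ ^ 2) l (𝓝 0)) : Tendsto f l (𝓝 0) := by
  have hsqrt := h.sqrt
  simp only [Real.sqrt_zero, Real.sqrt_sq (norm_nonneg _)] at hsqrt
  exact tendsto_zero_iff_norm_tendsto_zero.2 hsqrt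

theorem tendsto_extrapolation_sub_zero [NormedSpace ℝ E] {α β : ι → ℝ} {x x' : ι → E} {a : E}
    (hα : IsBoundedUnder (· ≤ ·) l (norm ∘ α)) (hβ : Tendsto β l (𝓝 0))
    (hx' : Tendsto (fun i => x i - x' i) l (𝓝 0))
    (hx : IsBoundedUnder (· ≤ ·) l (norm ∘ fun i => x i - a)) :
    Tendsto (fun i => x i + α i • (x i - x' i) + β i • (x i + α i • (x i - x' i) - a) - x i)
      l (𝓝 0) := by
  have hinertia := hα.smul_tendsto_zero hx'
  have hanchor := hβ.zero_smul_isBoundedUnder_le hx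
  have hsum := (hinertia.add (hβ.smul hinertia)).add hanchor
  simp only [smul_zero, add_zero] at hsum
  exact hsum.congr fun i => by module

end Normed

variable {ι E : Type*} [NormedAddCommGroup E] [InnerProductSpace ℝ E]

section Weak

/-- Weak convergence of the family `x` to `p` along the filter `l`, tested against inner products
(by the Riesz representation theorem these are all continuous functionals on a Hilbert space). -/
def WeakTendsto (x : ι → E) (l : Filter ι) (p : E) : Prop :=
  ∀ u : E, Tendsto (fun i => ⟪u, x i⟫) l (𝓝 ⟪u, p⟫)

theorem WeakTendsto.add_tendsto_zero {x d : ι → E} {l : Filter ι} {p : E}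
    (hx : WeakTendsto x l p) (hd : Tendsto d l (𝓝 0)) :
    WeakTendsto (fun i => x i + d i) l p := fun u => by
  simpa only [inner_add_right, inner_zero_right, add_zero] using
    (hx u).add ((tendsto_const_nhds (x := u)).inner hd)

theorem WeakTendsto.inner_sub {x : ι → E} {l : Filter ι} {p : E} (hx : WeakTendsto x l p)
    (u a : E) : Tendsto (fun i => ⟪u, x i - a⟫) l (𝓝 ⟪u, p - a⟫) := by
  simpa only [inner_sub_right] using (hx u).sub_const ⟪u, a⟫

theorem exists_weakTendsto_ultrafilter [CompleteSpace E] {x : ι → E} {R : ℝ}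
    (hx : ∀ i, ‖x i‖ ≤ R) (U : Ultrafilter ι) : ∃ p, WeakTendsto x U p := by
  let φ : ι → WeakDual ℝ E := fun i =>
    StrongDual.toWeakDual (InnerProductSpace.toDual ℝ E (x i))
  have hφ : ∀ i, φ i ∈ WeakDual.toStrongDual ⁻¹' Metric.closedBall (0 : StrongDual ℝ E) R :=
    fun i => mem_closedBall_zero_iff.2 <|
      ((InnerProductSpace.toDual ℝ E).norm_map (x i)).trans_le (hx i)
  obtain ⟨g, -, hg⟩ := (WeakDual.isCompact_closedBall (𝕜 := ℝ) 0 R).ultrafilter_le_nhds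
    (U.map φ) (le_principal_iff.2 (mem_map.2 (univ_mem' hφ)))
  refine ⟨(InnerProductSpace.toDual ℝ E).symm (WeakDual.toStrongDual g), fun u => ?_⟩
  have heval : Tendsto (fun i => ⟪x i, u⟫) U (𝓝 (g u)) :=
    ((WeakDual.eval_continuous (𝕜 := ℝ) u).tendsto g).comp hg
  simp only [real_inner_comm _ u]
  rwa [InnerProductSpace.toDual_symm_apply]

end Weak

section Projection

theorem inner_sub_sub_nonpos_of_forall_norm_sub_le {K : Set E} (hK : Convex ℝ K) {a b : E}
    (hb : b ∈ K) (hmin : ∀ z ∈ K, ‖b - a‖ ≤ ‖z - a‖) {z : E} (hz : z ∈ K) :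
    ⟪a - b, z - b⟫ ≤ 0 := by
  have : Nonempty K := ⟨⟨b, hb⟩⟩
  have hbdd : BddBelow (Set.range fun z : K => ‖a - z‖) :=
    ⟨0, Set.forall_mem_range.2 fun _ => norm_nonneg _⟩
  have hinf : ‖a - b‖ = ⨅ z : K, ‖a - z‖ :=
    le_antisymm (le_ciInf fun z => by simpa only [norm_sub_rev a] using hmin z z.2)
      (ciInf_le hbdd ⟨b, hb⟩)
  exact (norm_eq_iInf_iff_real_inner_le_zero hK hb).1 hinf z hz

theorem convex_setOf_inner_sub_le (b v : E) (r : ℝ) : Convex ℝ {z | ⟪z - b, v⟫ ≤ r} := by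
  have hlin : IsLinearMap ℝ fun z : E => ⟪z, v⟫ :=
    ⟨fun _ _ => inner_add_left _ _ _, fun _ _ => real_inner_smul_left _ _ _⟩
  simpa only [inner_sub_left, sub_le_iff_le_add] using convex_halfSpace_le hlin (r + ⟪b, v⟫)

/-- `P` is the metric projection onto `C`, encoded by its variational characterization. -/
def IsMetricProjection (C : Set E) (P : E → E) : Prop :=
  ∀ u, P u ∈ C ∧ ∀ z ∈ C, ⟪u - P u, z - P u⟫ ≤ 0

namespace IsMetricProjection

variable {C : Set E} {P : E → E}

theorem mem_of_inner_nonpos (hP : IsMetricProjection C P) {u : E}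
    (hu : ⟪u - P u, u - P u⟫ ≤ 0) : u ∈ C := by
  rw [sub_eq_zero.1 (inner_self_eq_zero.1 (hu.antisymm real_inner_self_nonneg))]
  exact (hP u).1

theorem convex (hP : IsMetricProjection C P) : Convex ℝ C := by
  refine convex_iff_forall_pos.2 fun a ha b hb s t hs ht hst => hP.mem_of_inner_nonpos ?_
  set m := s • a + t • b
  have hsplit : m - P m = s • (a - P m) + t • (b - P m) := by
    rw [smul_sub, smul_sub, sub_add_sub_comm, ← add_smul, hst, one_smul]
  calc ⟪m - P m, m - P m⟫ = s * ⟪m - P m, a - P m⟫ + t * ⟪m - P m, b - P m⟫ := by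
        nth_rw 2 [hsplit]
        rw [inner_add_right, real_inner_smul_right, real_inner_smul_right]
    _ ≤ 0 := add_nonpos (mul_nonpos_of_nonneg_of_nonpos hs.le ((hP m).2 a ha))
        (mul_nonpos_of_nonneg_of_nonpos ht.le ((hP m).2 b hb))

theorem mem_of_weakTendsto (hP : IsMetricProjection C P) {y : ι → E} {l : Filter ι} [l.NeBot]
    {p : E} (hy : ∀ i, y i ∈ C) (hp : WeakTendsto y l p) : p ∈ C :=
  hP.mem_of_inner_nonpos <|
    le_of_tendsto (hp.inner_sub (p - P p) (P p)) (Eventually.of_forall fun i => (hP p).2 _ (hy i))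

theorem norm_sub_apply_le (hP : IsMetricProjection C P) (u : E) {z : E} (hz : z ∈ C) :
    ‖z - P u‖ ≤ ‖u - z‖ := by
  have hexp := norm_sub_sq_real (u - P u) (z - P u)
  rw [sub_sub_sub_cancel_right] at hexp
  exact le_of_sq_le_sq (by linarith [(hP u).2 z hz, sq_nonneg ‖u - P u‖]) (norm_nonneg _)

end IsMetricProjection

end Projection

section Haugazeau

/-- The half-space of points `z` with `⟪z - b, a - b⟫ ≤ 0`: for `a ≠ b`, the one whose point
nearest to `a` is `b`. -/
def haugazeauHalfSpace (a b : E) : Set E := {z | ⟪z - b, a - b⟫ ≤ 0}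

theorem norm_sq_add_norm_sq_le_of_mem_haugazeauHalfSpace {a b z : E}
    (hz : z ∈ haugazeauHalfSpace a b) :
    ‖z - b‖ ^ 2 + ‖b - a‖ ^ 2 ≤ ‖z - a‖ ^ 2 := by
  have hexp := norm_sub_sq_real (z - b) (a - b)
  rw [sub_sub_sub_cancel_right, norm_sub_rev a b] at hexp
  linarith [show ⟪z - b, a - b⟫ ≤ 0 from hz]

theorem WeakTendsto.tendsto_of_forall_mem_haugazeauHalfSpace {x : ι → E} {l : Filter ι}
    {a s p : E} (hx : WeakTendsto x l p) (hs : ∀ i, s ∈ haugazeauHalfSpace a (x i))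
    (hp : ‖s - a‖ ≤ ‖p - a‖) : Tendsto x l (𝓝 s) := by
  have hbound : ∀ i, ‖x i - s‖ ^ 2 ≤ 2 * (⟪p - a, p - a⟫ - ⟪p - a, x i - a⟫) := fun i => by
    have hsq : ‖s - a‖ ^ 2 ≤ ‖p - a‖ ^ 2 := by gcongr
    have hpyth := norm_sq_add_norm_sq_le_of_mem_haugazeauHalfSpace (hs i)
    have hexp := norm_sub_sq_real (p - a) (x i - a)
    rw [norm_sub_rev] at hpyth
    rw [real_inner_self_eq_norm_sq]
    linarith [sq_nonneg ‖p - a - (x i - a)‖]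
  have hlim : Tendsto (fun i => 2 * (⟪p - a, p - a⟫ - ⟪p - a, x i - a⟫)) l (𝓝 0) := by
    simpa only [sub_self, mul_zero] using
      ((hx.inner_sub (p - a) a).const_sub ⟪p - a, p - a⟫).const_mul 2
  exact tendsto_sub_nhds_zero_iff.1 <|
    tendsto_zero_of_norm_sq_tendsto_zero (squeeze_zero (fun _ => sq_nonneg _) hbound hlim)

/-- Haugazeau's iteration for the sets `K`: `x (k + 1)` is the nearest point to `x 0` in
`K k ∩ haugazeauHalfSpace (x 0) (x k)`. -/
structure IsHaugazeauSeq (K : ℕ → Set E) (x : ℕ → E) : Prop where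
  mem : ∀ k, x (k + 1) ∈ K k ∩ haugazeauHalfSpace (x 0) (x k)
  norm_le : ∀ k, ∀ z ∈ K k ∩ haugazeauHalfSpace (x 0) (x k), ‖x (k + 1) - x 0‖ ≤ ‖z - x 0‖

namespace IsHaugazeauSeq

variable {K : ℕ → Set E} {x : ℕ → E} {s : E}

theorem mem_haugazeauHalfSpace (hx : IsHaugazeauSeq K x) (hK : ∀ k, Convex ℝ (K k))
    (hs : ∀ k, s ∈ K k) (k : ℕ) : s ∈ haugazeauHalfSpace (x 0) (x k) := by
  induction k with
  | zero => simp [haugazeauHalfSpace]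
  | succ k ih =>
    have hconv := (hK k).inter (convex_setOf_inner_sub_le (x k) (x 0 - x k) 0)
    exact (real_inner_comm _ _).trans_le <|
      inner_sub_sub_nonpos_of_forall_norm_sub_le hconv (hx.mem k) (hx.norm_le k) ⟨hs k, ih⟩

theorem norm_sub_le (hx : IsHaugazeauSeq K x) (hK : ∀ k, Convex ℝ (K k)) (hs : ∀ k, s ∈ K k)
    (k : ℕ) : ‖x k - x 0‖ ≤ ‖s - x 0‖ := by
  have hpyth := norm_sq_add_norm_sq_le_of_mem_haugazeauHalfSpace (hx.mem_haugazeauHalfSpace hK hs k)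
  exact le_of_sq_le_sq (by linarith [sq_nonneg ‖s - x k‖]) (norm_nonneg _)

theorem norm_le_add (hx : IsHaugazeauSeq K x) (hK : ∀ k, Convex ℝ (K k)) (hs : ∀ k, s ∈ K k)
    (k : ℕ) : ‖x k‖ ≤ ‖s - x 0‖ + ‖x 0‖ :=
  (norm_le_norm_sub_add (x k) (x 0)).trans (by gcongr; exact hx.norm_sub_le hK hs k)

theorem tendsto_step_zero (hx : IsHaugazeauSeq K x) (hK : ∀ k, Convex ℝ (K k))
    (hs : ∀ k, s ∈ K k) : Tendsto (fun k => x (k + 1) - x k) atTop (𝓝 0) := by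
  have hstep : ∀ k, ‖x (k + 1) - x k‖ ^ 2 + ‖x k - x 0‖ ^ 2 ≤ ‖x (k + 1) - x 0‖ ^ 2 :=
    fun k => norm_sq_add_norm_sq_le_of_mem_haugazeauHalfSpace (hx.mem k).2
  have hmono : Monotone fun k => ‖x k - x 0‖ ^ 2 :=
    monotone_nat_of_le_succ fun k => by linarith [hstep k, sq_nonneg ‖x (k + 1) - x k‖]
  have hbdd : BddAbove (Set.range fun k => ‖x k - x 0‖ ^ 2) :=
    ⟨‖s - x 0‖ ^ 2, Set.forall_mem_range.2 fun k => by gcongr; exact hx.norm_sub_le hK hs k⟩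
  have hlim := tendsto_atTop_ciSup hmono hbdd
  have hdiff := ((tendsto_add_atTop_iff_nat 1).2 hlim).sub hlim
  rw [sub_self] at hdiff
  exact tendsto_zero_of_norm_sq_tendsto_zero <|
    squeeze_zero (fun _ => sq_nonneg _) (fun k => le_sub_iff_add_le.2 (hstep k)) hdiff

theorem tendsto_of_forall_weakTendsto [CompleteSpace E] (hx : IsHaugazeauSeq K x)
    (hK : ∀ k, Convex ℝ (K k)) (hs : ∀ k, s ∈ K k)
    (hmin : ∀ (U : Ultrafilter ℕ) (p : E), (U : Filter ℕ) ≤ atTop → WeakTendsto x U p →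
      ‖s - x 0‖ ≤ ‖p - x 0‖) : Tendsto x atTop (𝓝 s) := by
  refine (tendsto_iff_ultrafilter _ _ _).2 fun U hU => ?_
  obtain ⟨p, hp⟩ := exists_weakTendsto_ultrafilter (hx.norm_le_add hK hs) U
  exact hp.tendsto_of_forall_mem_haugazeauHalfSpace (hx.mem_haugazeauHalfSpace hK hs)
    (hmin U p hU hp)

end IsHaugazeauSeq

end Haugazeau

section VariationalInequality

/-- The solutions of the variational inequality: the `z ∈ C` with `⟪F z, u - z⟫ ≥ 0` on `C`. -/
def viSolutions (F : E → E) (C : Set E) : Set E := {z | z ∈ C ∧ ∀ u ∈ C, 0 ≤ ⟪F z, u - z⟫}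

theorem mem_viSolutions_of_forall_inner_nonneg {F : E → E} {C : Set E} (hC : Convex ℝ C)
    (hF : ContinuousOn F C) {p : E} (hp : p ∈ C) (h : ∀ u ∈ C, 0 ≤ ⟪F u, u - p⟫) :
    p ∈ viSolutions F C := by
  refine ⟨hp, fun u hu => ?_⟩
  let c : ℝ → E := fun t => p + t • (u - p)
  have hc0 : c 0 = p := by simp only [c, zero_smul, add_zero]
  have hcC : ∀ᶠ t in 𝓝[>] 0, c t ∈ C := by
    filter_upwards [Ioc_mem_nhdsGT zero_lt_one] with t ht
    exact hC.add_smul_sub_mem hp hu ⟨ht.1.le, ht.2⟩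
  have hc : Tendsto c (𝓝[>] 0) (𝓝[C] p) := by
    refine tendsto_nhdsWithin_iff.2 ⟨?_, hcC⟩
    have hcont : Continuous c := by fun_prop
    simpa only [hc0] using (hcont.tendsto 0).mono_left nhdsWithin_le_nhds
  have hlim : Tendsto (fun t => ⟪F (c t), u - p⟫) (𝓝[>] 0) (𝓝 ⟪F p, u - p⟫) :=
    ((hF p hp).tendsto.comp hc).inner tendsto_const_nhds
  refine ge_of_tendsto hlim ?_
  filter_upwards [hcC, self_mem_nhdsWithin] with t htC ht
  have hray := h (c t) htC
  rw [add_sub_cancel_left, real_inner_smul_right] at hray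
  exact nonneg_of_mul_nonneg_right hray ht

end VariationalInequality

section Extragradient

/-- Korpelevich's prediction step `y` from the point `w`. -/
def extragradPredictor (P F : E → E) (lam : ℝ) (w : E) : E := P (w - lam • F (P w))

/-- The residual `q = (w - ỹ) / λ - F y` of the correction step `ỹ = P (w - λ F y)`. -/
noncomputable def extragradResidual (P F : E → E) (lam : ℝ) (w y : E) : E :=
  (1 / lam) • (w - P (w - lam • F y)) - F y

/-- The half-space `H_k` of the method for `w = w̃_k` and `y = y_k`. -/
def extragradCut (P F : E → E) (lam : ℝ) (w y : E) : Set E :=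
  {z | ⟪z - y, F y + extragradResidual P F lam w y⟫ ≤
    ⟪extragradResidual P F lam w y, P (w - lam • F y) - y⟫}

variable {C : Set E} {P F : E → E} {L lam : ℝ} {w y z u : E}

theorem extragradPredictor_mem (hP : IsMetricProjection C P) :
    extragradPredictor P F lam w ∈ C :=
  (hP _).1

theorem convex_extragradCut (P F : E → E) (lam : ℝ) (w y : E) :
    Convex ℝ (extragradCut P F lam w y) :=
  convex_setOf_inner_sub_le _ _ _

theorem mem_extragradCut_iff (hlam : 0 < lam) :
    z ∈ extragradCut P F lam w y ↔ ⟪z - y, w - P (w - lam • F y)⟫ ≤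
      ⟪w - lam • F y - P (w - lam • F y), P (w - lam • F y) - y⟫ := by
  have hnormal : lam • (F y + extragradResidual P F lam w y) = w - P (w - lam • F y) := by
    rw [extragradResidual, add_sub_cancel, smul_smul, mul_one_div_cancel hlam.ne', one_smul]
  have hresidual : lam • extragradResidual P F lam w y =
      w - lam • F y - P (w - lam • F y) := by
    rw [sub_right_comm, ← hnormal, smul_add, add_sub_cancel_left]
  rw [← hresidual, ← hnormal, real_inner_smul_left, real_inner_smul_right,
    mul_le_mul_iff_right₀ hlam]
  rfl

theorem viSolutions_subset_extragradCut (hP : IsMetricProjection C P)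
    (hmono : ∀ x ∈ C, ∀ y ∈ C, 0 ≤ ⟪F x - F y, x - y⟫) (hlam : 0 < lam) (w : E)
    (hy : y ∈ C) : viSolutions F C ⊆ extragradCut P F lam w y := by
  rintro s ⟨hsC, hs⟩
  set y' := P (w - lam • F y) with hy'
  have hFy : 0 ≤ lam * ⟪F y, y - s⟫ := by
    have hFmono := hmono y hy s hsC
    rw [inner_sub_left] at hFmono
    exact mul_nonneg hlam.le (by linarith [hs y hy])
  have hproj : ⟪w - lam • F y - y', s - y'⟫ ≤ 0 := (hP _).2 s hsC
  rw [mem_extragradCut_iff hlam, ← hy']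
  calc ⟪s - y, w - y'⟫ = ⟪w - lam • F y - y', s - y'⟫ - lam * ⟪F y, y - s⟫
        + ⟪w - lam • F y - y', y' - y⟫ := by
        rw [← real_inner_smul_left, real_inner_comm]
        simp only [inner_sub_left, inner_sub_right]
        ring
    _ ≤ ⟪w - lam • F y - y', y' - y⟫ := by linarith

theorem norm_map_projection_sub_map_le (hP : IsMetricProjection C P)
    (hlip : ∀ x ∈ C, ∀ y ∈ C, ‖F x - F y‖ ≤ L * ‖x - y‖) (hL : 0 ≤ L) (hy : y ∈ C) :
    ‖F (P w) - F y‖ ≤ L * ‖w - y‖ := by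
  refine (hlip _ (hP w).1 y hy).trans ?_
  rw [norm_sub_rev]
  gcongr
  exact hP.norm_sub_apply_le w hy

theorem norm_sub_sq_add_inner_le_of_mem_extragradCut (hP : IsMetricProjection C P)
    (hlam : 0 < lam) (hy : y = extragradPredictor P F lam w)
    (hz : z ∈ extragradCut P F lam w y) :
    ‖w - P (w - lam • F y)‖ ^ 2 + ⟪w - y, P (w - lam • F y) - y⟫ ≤
      ⟪w - z, w - P (w - lam • F y)⟫ + lam * ⟪F (P w) - F y, P (w - lam • F y) - y⟫ := by
  have hcut := (mem_extragradCut_iff hlam).1 hz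
  set y' := P (w - lam • F y)
  have hpred : ⟪w - lam • F (P w) - y, y' - y⟫ ≤ 0 := by
    rw [hy, extragradPredictor]
    exact (hP _).2 _ (hP _).1
  rw [← real_inner_self_eq_norm_sq, ← real_inner_smul_left, smul_sub]
  simp only [inner_sub_left, inner_sub_right, real_inner_comm w y', real_inner_comm w y,
    real_inner_comm y y', real_inner_comm w z] at hcut hpred ⊢
  linarith

theorem mul_norm_sub_predictor_sq_le (hP : IsMetricProjection C P)
    (hlip : ∀ x ∈ C, ∀ y ∈ C, ‖F x - F y‖ ≤ L * ‖x - y‖) (hL : 0 ≤ L) (hlam : 0 < lam)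
    (hlamL : lam * L ≤ 1) (hy : y = extragradPredictor P F lam w)
    (hz : z ∈ extragradCut P F lam w y) :
    (1 - lam * L) * ‖w - y‖ ^ 2 ≤ ‖w - z‖ ^ 2 := by
  have hyC : y ∈ C := hy ▸ extragradPredictor_mem hP
  have hcut := norm_sub_sq_add_inner_le_of_mem_extragradCut hP hlam hy hz
  set y' := P (w - lam • F y)
  have hexp : ‖w - y'‖ ^ 2 = ‖w - y‖ ^ 2 - 2 * ⟪w - y, y' - y⟫ + ‖y' - y‖ ^ 2 := by
    rw [← norm_sub_sq_real, sub_sub_sub_cancel_right]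
  have hinner : 2 * ⟪w - z, w - y'⟫ ≤ ‖w - z‖ ^ 2 + ‖w - y'‖ ^ 2 := by
    linarith [real_inner_le_norm (w - z) (w - y'), two_mul_le_add_sq ‖w - z‖ ‖w - y'‖]
  have hF : 2 * (lam * ⟪F (P w) - F y, y' - y⟫) ≤
      lam * L * ‖w - y‖ ^ 2 + lam * L * ‖y' - y‖ ^ 2 :=
    calc 2 * (lam * ⟪F (P w) - F y, y' - y⟫)
        ≤ 2 * (lam * (L * ‖w - y‖ * ‖y' - y‖)) := by
          gcongr
          refine (real_inner_le_norm _ _).trans ?_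
          gcongr
          exact norm_map_projection_sub_map_le hP hlip hL hyC
      _ = lam * L * (2 * ‖w - y‖ * ‖y' - y‖) := by ring
      _ ≤ lam * L * (‖w - y‖ ^ 2 + ‖y' - y‖ ^ 2) := by
          gcongr
          exact two_mul_le_add_sq _ _
      _ = _ := mul_add _ _ _
  have hslack : lam * L * ‖y' - y‖ ^ 2 ≤ ‖y' - y‖ ^ 2 :=
    mul_le_of_le_one_left (sq_nonneg _) hlamL
  linarith

theorem tendsto_sub_predictor_zero (hP : IsMetricProjection C P)
    (hlip : ∀ x ∈ C, ∀ y ∈ C, ‖F x - F y‖ ≤ L * ‖x - y‖) (hL : 0 ≤ L) (hlam : 0 < lam)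
    (hlamL : lam * L < 1) {w y z : ι → E} {l : Filter ι}
    (hy : ∀ i, y i = extragradPredictor P F lam (w i))
    (hz : ∀ i, z i ∈ extragradCut P F lam (w i) (y i))
    (hwz : Tendsto (fun i => w i - z i) l (𝓝 0)) : Tendsto (fun i => w i - y i) l (𝓝 0) := by
  have hbound : ∀ i, ‖w i - y i‖ ^ 2 ≤ ‖w i - z i‖ ^ 2 / (1 - lam * L) := fun i =>
    (le_div_iff₀' (sub_pos.2 hlamL)).2 <|
      mul_norm_sub_predictor_sq_le hP hlip hL hlam hlamL.le (hy i) (hz i)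
  have hlim : Tendsto (fun i => ‖w i - z i‖ ^ 2 / (1 - lam * L)) l (𝓝 0) := by
    simpa using (hwz.norm.pow 2).div_const (1 - lam * L)
  exact tendsto_zero_of_norm_sq_tendsto_zero (squeeze_zero (fun _ => sq_nonneg _) hbound hlim)

theorem neg_mul_norm_le_mul_inner_sub_predictor (hP : IsMetricProjection C P)
    (hmono : ∀ x ∈ C, ∀ y ∈ C, 0 ≤ ⟪F x - F y, x - y⟫)
    (hlip : ∀ x ∈ C, ∀ y ∈ C, ‖F x - F y‖ ≤ L * ‖x - y‖) (hL : 0 ≤ L) (hlam : 0 ≤ lam)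
    (hy : y = extragradPredictor P F lam w) (hu : u ∈ C) :
    -((1 + lam * L) * (‖w - y‖ * ‖u - y‖)) ≤ lam * ⟪F u, u - y⟫ := by
  have hyC : y ∈ C := hy ▸ extragradPredictor_mem hP
  have hpred : ⟪w - y, u - y⟫ - lam * ⟪F (P w), u - y⟫ ≤ 0 := by
    rw [← real_inner_smul_left, ← inner_sub_left, sub_right_comm, hy]
    exact (hP _).2 u hu
  have hFmono : lam * ⟪F y, u - y⟫ ≤ lam * ⟪F u, u - y⟫ := by
    gcongr
    simpa only [inner_sub_left, sub_nonneg] using hmono u hu y hyC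
  have hinner := neg_le_of_abs_le (abs_real_inner_le_norm (w - y) (u - y))
  have hF : lam * (⟪F (P w), u - y⟫ - ⟪F y, u - y⟫) ≤ lam * (L * ‖w - y‖ * ‖u - y‖) := by
    rw [← inner_sub_left]
    gcongr
    refine (real_inner_le_norm _ _).trans ?_
    gcongr
    exact norm_map_projection_sub_map_le hP hlip hL hyC
  linarith

theorem mem_viSolutions_of_weakTendsto_predictor (hP : IsMetricProjection C P)
    (hmono : ∀ x ∈ C, ∀ y ∈ C, 0 ≤ ⟪F x - F y, x - y⟫)
    (hlip : ∀ x ∈ C, ∀ y ∈ C, ‖F x - F y‖ ≤ L * ‖x - y‖) (hL : 0 ≤ L) (hlam : 0 < lam)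
    {w y : ι → E} {l : Filter ι} [l.NeBot] {p : E}
    (hy : ∀ i, y i = extragradPredictor P F lam (w i))
    (hwy : Tendsto (fun i => w i - y i) l (𝓝 0))
    (hbdd : IsBoundedUnder (· ≤ ·) l (norm ∘ y)) (hp : WeakTendsto y l p) :
    p ∈ viSolutions F C := by
  have hFcont : ContinuousOn F C := (LipschitzOnWith.of_dist_le' (K := L) fun x hx y hy => by
    simpa only [dist_eq_norm] using hlip x hx y hy).continuousOn
  have hpC : p ∈ C := hP.mem_of_weakTendsto (fun i => hy i ▸ extragradPredictor_mem hP) hp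
  refine mem_viSolutions_of_forall_inner_nonneg hP.convex hFcont hpC fun u hu => ?_
  have hlim : Tendsto (fun i => lam * ⟪F u, u - y i⟫) l (𝓝 (lam * ⟪F u, u - p⟫)) := by
    simpa only [inner_sub_right] using ((hp (F u)).const_sub ⟪F u, u⟫).const_mul lam
  have hbddu : IsBoundedUnder (· ≤ ·) l ((‖·‖) ∘ fun i => ‖u - y i‖) := by
    obtain ⟨B, hB⟩ := hbdd
    refine ⟨‖u‖ + B, eventually_map.2 ((eventually_map.1 hB).mono fun i hi => ?_)⟩
    simp only [Function.comp_apply, norm_norm] at hi ⊢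
    exact (norm_sub_le u (y i)).trans (by gcongr)
  have hprod : Tendsto (fun i => ‖w i - y i‖ * ‖u - y i‖) l (𝓝 0) :=
    (tendsto_zero_iff_norm_tendsto_zero.1 hwy).zero_mul_isBoundedUnder_le hbddu
  have hlower : Tendsto (fun i => -((1 + lam * L) * (‖w i - y i‖ * ‖u - y i‖))) l (𝓝 0) := by
    simpa only [mul_zero, neg_zero] using (hprod.const_mul (1 + lam * L)).neg
  have hmul : 0 ≤ lam * ⟪F u, u - p⟫ := le_of_tendsto_of_tendsto' hlower hlim fun i =>
    neg_mul_norm_le_mul_inner_sub_predictor hP hmono hlip hL hlam.le (hy i) hu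
  exact nonneg_of_mul_nonneg_right hmul hlam

theorem IsHaugazeauSeq.tendsto_of_extragradCut [CompleteSpace E] (hP : IsMetricProjection C P)
    (hmono : ∀ x ∈ C, ∀ y ∈ C, 0 ≤ ⟪F x - F y, x - y⟫)
    (hlip : ∀ x ∈ C, ∀ y ∈ C, ‖F x - F y‖ ≤ L * ‖x - y‖) (hL : 0 ≤ L) (hlam : 0 < lam)
    (hlamL : lam * L < 1) {x w y : ℕ → E} {s : E}
    (hy : ∀ k, y k = extragradPredictor P F lam (w k))
    (hx : IsHaugazeauSeq (fun k => extragradCut P F lam (w k) (y k)) x)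
    (hwx : Tendsto (fun k => w k - x k) atTop (𝓝 0)) (hs : s ∈ viSolutions F C)
    (hmin : ∀ z ∈ viSolutions F C, ‖s - x 0‖ ≤ ‖z - x 0‖) :
    Tendsto x atTop (𝓝 s) ∧ Tendsto y atTop (𝓝 s) := by
  have hyC : ∀ k, y k ∈ C := fun k => hy k ▸ extragradPredictor_mem hP
  have hK : ∀ k, Convex ℝ (extragradCut P F lam (w k) (y k)) := fun k =>
    convex_extragradCut P F lam (w k) (y k)
  have hsK : ∀ k, s ∈ extragradCut P F lam (w k) (y k) := fun k =>
    viSolutions_subset_extragradCut hP hmono hlam (w k) (hyC k) hs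
  have hwx' : Tendsto (fun k => w k - x (k + 1)) atTop (𝓝 0) := by
    simpa only [sub_sub_sub_cancel_right, sub_zero] using hwx.sub (hx.tendsto_step_zero hK hsK)
  have hwy : Tendsto (fun k => w k - y k) atTop (𝓝 0) :=
    tendsto_sub_predictor_zero hP hlip hL hlam hlamL hy (fun k => (hx.mem k).1) hwx'
  have hyx : Tendsto (fun k => y k - x k) atTop (𝓝 0) := by
    simpa only [sub_sub_sub_cancel_left, sub_zero] using hwx.sub hwy
  have hybdd : IsBoundedUnder (· ≤ ·) atTop (norm ∘ y) := by
    refine (isBoundedUnder_le_add hyx.norm.isBoundedUnder_le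
      (isBoundedUnder_of ⟨_, hx.norm_le_add hK hsK⟩)).mono_le (.of_forall fun k => ?_)
    exact norm_le_norm_sub_add (y k) (x k)
  have hxs : Tendsto x atTop (𝓝 s) := by
    refine hx.tendsto_of_forall_weakTendsto hK hsK fun U p hU hp => hmin p ?_
    have hyp : WeakTendsto y U p := by
      simpa only [add_sub_cancel] using hp.add_tendsto_zero (hyx.mono_left hU)
    exact mem_viSolutions_of_weakTendsto_predictor hP hmono hlip hL hlam hy
      (hwy.mono_left hU) (hybdd.mono hU) hyp
  exact ⟨hxs, by simpa only [sub_add_cancel, zero_add] using hyx.add hxs⟩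

end Extragradient

theorem stmt13_general
    {C : Set H} {F : H → H} {L : ℝ} (hL : 0 < L)
    (hmono : ∀ x ∈ C, ∀ y ∈ C, 0 ≤ ⟪F x - F y, x - y⟫)
    (hlip : ∀ x ∈ C, ∀ y ∈ C, ‖F x - F y‖ ≤ L * ‖x - y‖)
    {PC : H → H} (hPC : IsMetricProjection C PC)
    {σ lam : ℝ} (hσ0 : 0 < σ) (hσ1 : σ < 1) (hlam : lam = σ / L)
    {α β : ℕ → ℝ} (hα : BddAbove (Set.range fun k => |α k|)) (hβ : Tendsto β atTop (𝓝 0))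
    {x w wt w' y yt q v : ℕ → H} {ε : ℕ → ℝ}
    (hw : ∀ k, w k = x k + α k • (x k - x (k - 1)))
    (hwt : ∀ k, wt k = w k + β k • (w k - x 0))
    (hw' : ∀ k, w' k = PC (wt k))
    (hy : ∀ k, y k = PC (wt k - lam • F (w' k)))
    (hyt : ∀ k, yt k = PC (wt k - lam • F (y k)))
    (hq : ∀ k, q k = (1 / lam) • (wt k - yt k) - F (y k))
    (hv : ∀ k, v k = F (y k) + q k)
    (hε : ∀ k, ε k = ⟪q k, yt k - y k⟫)
    (hmem : ∀ k, ⟪x (k + 1) - y k, v k⟫ ≤ ε k ∧ ⟪x (k + 1) - x k, x 0 - x k⟫ ≤ 0)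
    (hproj : ∀ k, ∀ z : H, ⟪z - y k, v k⟫ ≤ ε k → ⟪z - x k, x 0 - x k⟫ ≤ 0 →
      ‖x (k + 1) - x 0‖ ≤ ‖z - x 0‖)
    {xstar : H} (hxstarS : xstar ∈ viSolutions F C)
    (hxstar : ∀ z ∈ viSolutions F C, ‖xstar - x 0‖ ≤ ‖z - x 0‖) :
    Tendsto x atTop (𝓝 xstar) ∧ Tendsto y atTop (𝓝 xstar) := by
  have hlam0 : 0 < lam := hlam ▸ div_pos hσ0 hL
  have hlamL : lam * L < 1 := by rwa [hlam, div_mul_cancel₀ σ hL.ne']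
  simp only [hw'] at hy
  simp only [hv, hε, hq, hyt] at hmem hproj
  have hx : IsHaugazeauSeq (fun k => extragradCut PC F lam (wt k) (y k)) x :=
    ⟨hmem, fun k z hz => hproj k z hz.1 hz.2⟩
  have hyC : ∀ k, y k ∈ C := fun k => hy k ▸ extragradPredictor_mem hPC
  have hK : ∀ k, Convex ℝ (extragradCut PC F lam (wt k) (y k)) := fun k =>
    convex_extragradCut PC F lam (wt k) (y k)
  have hsK : ∀ k, xstar ∈ extragradCut PC F lam (wt k) (y k) := fun k =>
    viSolutions_subset_extragradCut hPC hmono hlam0 (wt k) (hyC k) hxstarS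
  have hstep : Tendsto (fun k => x k - x (k - 1)) atTop (𝓝 0) :=
    (tendsto_add_atTop_iff_nat 1).1 (hx.tendsto_step_zero hK hsK)
  have hxbdd : IsBoundedUnder (· ≤ ·) atTop (norm ∘ fun k => x k - x 0) :=
    isBoundedUnder_of ⟨_, hx.norm_sub_le hK hsK⟩
  have hwx : Tendsto (fun k => wt k - x k) atTop (𝓝 0) := by
    simpa only [hwt, hw] using
      tendsto_extrapolation_sub_zero hα.isBoundedUnder_of_range hβ hstep hxbdd
  exact hx.tendsto_of_extragradCut hPC hmono hlip hL.le hlam0 hlamL hy hwx hxstarS hxstar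

/-- Theorem 4.2(a): strong convergence of the inertial Korpelevich extragradient method. -/
theorem stmt13
    (C : Set H) (hCne : C.Nonempty) (hCcl : IsClosed C) (hCconv : Convex ℝ C)
    (F : H → H) (L : ℝ) (hL : 0 < L)
    (hmono : ∀ x ∈ C, ∀ y ∈ C, 0 ≤ ⟪F x - F y, x - y⟫)
    (hlip : ∀ x ∈ C, ∀ y ∈ C, ‖F x - F y‖ ≤ L * ‖x - y‖)
    (PC : H → H)
    (hPC : ∀ u : H, PC u ∈ C ∧ ∀ z ∈ C, ⟪u - PC u, z - PC u⟫ ≤ 0)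
    (σ lam : ℝ) (hσ0 : 0 < σ) (hσ1 : σ < 1) (hlam : lam = σ / L)
    (hS : {z : H | z ∈ C ∧ ∀ u ∈ C, 0 ≤ ⟪F z, u - z⟫}.Nonempty)
    (α β : ℕ → ℝ) (hα : ∀ k, 0 ≤ α k) (hβ : ∀ k, 0 ≤ β k)
    (x w wt w' y yt q v : ℕ → H) (ε : ℕ → ℝ)
    (hw : ∀ k, w k = x k + α k • (x k - x (k - 1)))
    (hwt : ∀ k, wt k = w k + β k • (w k - x 0))
    (hw' : ∀ k, w' k = PC (wt k))
    (hy : ∀ k, y k = PC (wt k - lam • F (w' k)))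
    (hyt : ∀ k, yt k = PC (wt k - lam • F (y k)))
    (hq : ∀ k, q k = (1 / lam) • (wt k - yt k) - F (y k))
    (hv : ∀ k, v k = F (y k) + q k)
    (hε : ∀ k, ε k = ⟪q k, yt k - y k⟫)
    (hmem : ∀ k, ⟪x (k + 1) - y k, v k⟫ ≤ ε k ∧ ⟪x (k + 1) - x k, x 0 - x k⟫ ≤ 0)
    (hproj : ∀ k, ∀ z : H, ⟪z - y k, v k⟫ ≤ ε k → ⟪z - x k, x 0 - x k⟫ ≤ 0 →
      ‖x (k + 1) - x 0‖ ≤ ‖z - x 0‖)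
    (habdd : BddAbove (Set.range α)) (hbbdd : BddAbove (Set.range β))
    (hsum : Summable fun k => β k ^ 2)
    (xstar : H) (hxstarS : xstar ∈ {z : H | z ∈ C ∧ ∀ u ∈ C, 0 ≤ ⟪F z, u - z⟫})
    (hxstar : ∀ z ∈ {z : H | z ∈ C ∧ ∀ u ∈ C, 0 ≤ ⟪F z, u - z⟫}, ‖xstar - x 0‖ ≤ ‖z - x 0‖) :
    Tendsto x atTop (𝓝 xstar) ∧ Tendsto y atTop (𝓝 xstar) := by
  have hα' : BddAbove (Set.range fun k => |α k|) := by simpa only [abs_of_nonneg (hα _)] using habdd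
  have hβ' : Tendsto β atTop (𝓝 0) := tendsto_zero_of_norm_sq_tendsto_zero <| by
    simpa only [Real.norm_eq_abs, sq_abs] using hsum.tendsto_atTop_zero
  exact stmt13_general hL hmono hlip hPC hσ0 hσ1 hlam hα' hβ' hw hwt hw' hy hyt hq hv hε hmem
    hproj hxstarS hxstar
end

section
/- (One iteration of the inertial forward-backward method is an inexact proximal step for F + B.) Let σ ∈ (0,1), λ := 2σ²/L and w̃ ∈ H. Set w' := P_C(w̃), let y ∈ H satisfy (w̃ − λ F(w') − y)/λ ∈ B(y) (i.e. y is the resolvent (λB + I)⁻¹(w̃ − λ F(w'))), and set v := (w̃ − y)/λ and ε := L‖y − w'‖²/4. Then F(w') ∈ F^ε(y), hence v ∈ F^ε(y) + B(y); moreover λv + y − w̃ = 0 and 2λε ≤ σ² ‖y − w̃‖². -/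
open scoped RealInnerProductSpace
open Filter Topology

variable {H : Type*} [NormedAddCommGroup H] [InnerProductSpace ℝ H] [CompleteSpace H]

/-!
Splitting `z - y = (z - w') - (y - w')`, cocoercivity gains `(1 / L) ‖F z - F w'‖²` on the first
part, and this absorbs the Young bound `(1 / L) ‖F z - F w'‖² + L ‖y - w'‖² / 4` for the second
part up to exactly `ε`. The error criterion reduces to `‖y - w'‖ ≤ ‖y - wt‖`: since `y` lies in the
domain of `B`, hence in `C`, projecting `wt` onto `C` cannot move it away from `y`.
-/

section InexactProximalStep

variable {E : Type*} [NormedAddCommGroup E] [InnerProductSpace ℝ E] {F : E → E}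

/-- `F` is `β`-cocoercive; for `β = 1 / L` this is the assumption on the forward operator. -/
def IsCocoercive (β : ℝ) (F : E → E) : Prop :=
  ∀ x y, β * ‖F x - F y‖ ^ 2 ≤ ⟪F x - F y, x - y⟫

/-- The `ε`-enlargement `F^ε` of a single-valued operator `F`, as a set-valued operator: `u` is
monotonically related to the graph of `F` at `y` up to `ε`, the error allowed in an inexact proximal
step. -/
def enlargement (F : E → E) (ε : ℝ) (y : E) : Set E :=
  {u | ∀ z, ⟪F z - u, z - y⟫ ≥ -ε}

theorem real_inner_le_mul_norm_sq_add_div {β : ℝ} (hβ : 0 < β) (a b : E) :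
    ⟪a, b⟫ ≤ β * ‖a‖ ^ 2 + ‖b‖ ^ 2 / (4 * β) := by
  have young : 2 * ‖a‖ * ‖b‖ ≤ 2 * β * ‖a‖ ^ 2 + (2 * β)⁻¹ * ‖b‖ ^ 2 :=
    two_mul_le_add_mul_sq (by positivity)
  calc ⟪a, b⟫ ≤ ‖a‖ * ‖b‖ := real_inner_le_norm a b
    _ ≤ (2 * β * ‖a‖ ^ 2 + (2 * β)⁻¹ * ‖b‖ ^ 2) / 2 := by linarith
    _ = β * ‖a‖ ^ 2 + ‖b‖ ^ 2 / (4 * β) := by field_simp; ring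

theorem IsCocoercive.mem_enlargement {β : ℝ} (hF : IsCocoercive β F) (hβ : 0 < β) (x y : E) :
    F x ∈ enlargement F (‖y - x‖ ^ 2 / (4 * β)) y := by
  intro z
  have cocoercive := hF z x
  have young := real_inner_le_mul_norm_sq_add_div hβ (F z - F x) (y - x)
  have inner_split : ⟪F z - F x, z - y⟫ = ⟪F z - F x, z - x⟫ - ⟪F z - F x, y - x⟫ := by
    rw [← inner_sub_right, sub_sub_sub_cancel_right]
  linarith

theorem norm_sub_le_norm_sub_of_inner_nonpos {x p z : E} (h : ⟪x - p, z - p⟫ ≤ 0) :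
    ‖z - p‖ ≤ ‖z - x‖ := by
  have expand : ‖z - x‖ ^ 2 = ‖z - p‖ ^ 2 - 2 * ⟪x - p, z - p⟫ + ‖x - p‖ ^ 2 := by
    rw [← sub_sub_sub_cancel_right z x p, norm_sub_sq_real, real_inner_comm]
  rw [← sq_le_sq₀ (norm_nonneg _) (norm_nonneg _), expand]
  linarith [sq_nonneg ‖x - p‖]

theorem inv_smul_sub_smul_sub {G M : Type*} [GroupWithZero G] [AddCommGroup M]
    [DistribMulAction G M] {c : G} (hc : c ≠ 0) (x u y : M) :
    c⁻¹ • (x - c • u - y) = c⁻¹ • (x - y) - u := by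
  rw [sub_right_comm, smul_sub c⁻¹ (x - y), inv_smul_smul₀ hc]

theorem stmt17_general {C : Set E} {L : ℝ} (hL : 0 < L) (hF : IsCocoercive (1 / L) F)
    {B : E → Set E} (hdomB : ∀ z, (B z).Nonempty → z ∈ C)
    {σ lam : ℝ} (hlam : 0 < lam) (hlam_le : lam ≤ 2 * σ ^ 2 / L)
    {wt w' y v : E} {ε : ℝ} (hw' : w' ∈ C ∧ ∀ z ∈ C, ⟪wt - w', z - w'⟫ ≤ 0)
    (hy : (1 / lam) • (wt - lam • F w' - y) ∈ B y)
    (hv : v = (1 / lam) • (wt - y)) (hε : ε = L * ‖y - w'‖ ^ 2 / 4) :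
    F w' ∈ enlargement F ε y ∧ v - F w' ∈ B y ∧
      lam • v + y - wt = 0 ∧ 2 * lam * ε ≤ σ ^ 2 * ‖y - wt‖ ^ 2 := by
  refine ⟨?_, ?_, ?_, ?_⟩
  · have error_eq : ε = ‖y - w'‖ ^ 2 / (4 * (1 / L)) := by rw [hε]; field_simp
    exact error_eq ▸ hF.mem_enlargement (one_div_pos.mpr hL) w' y
  · rwa [hv, one_div, ← inv_smul_sub_smul_sub hlam.ne', ← one_div]
  · rw [hv, one_div, smul_inv_smul₀ hlam.ne', sub_add_cancel, sub_self]
  · have step_size : lam * L / 2 ≤ σ ^ 2 := by linarith [(le_div_iff₀ hL).mp hlam_le]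
    have closer : ‖y - w'‖ ≤ ‖y - wt‖ :=
      norm_sub_le_norm_sub_of_inner_nonpos (hw'.2 y (hdomB y ⟨_, hy⟩))
    calc 2 * lam * ε = lam * L / 2 * ‖y - w'‖ ^ 2 := by rw [hε]; ring
      _ ≤ σ ^ 2 * ‖y - wt‖ ^ 2 := by gcongr

end InexactProximalStep

/-- Proposition 5.3: one iteration of the inertial forward-backward method is an
inexact proximal step for F + B, where F is (1/L)-cocoercive. -/
theorem stmt17
    (C : Set H) (hCne : C.Nonempty) (hCcl : IsClosed C) (hCconv : Convex ℝ C)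
    (F : H → H) (L : ℝ) (hL : 0 < L)
    (hcoco : ∀ x y : H, (1 / L) * ‖F x - F y‖ ^ 2 ≤ ⟪F x - F y, x - y⟫)
    (B : H → Set H) (hB : IsMaxMonotoneOp B)
    (hdomB : ∀ z : H, (B z).Nonempty → z ∈ C)
    (PC : H → H)
    (hPC : ∀ u : H, PC u ∈ C ∧ ∀ z ∈ C, ⟪u - PC u, z - PC u⟫ ≤ 0)
    (σ lam : ℝ) (hσ0 : 0 < σ) (hσ1 : σ < 1) (hlam : lam = 2 * σ ^ 2 / L)
    (wt w' y v : H) (ε : ℝ)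
    (hw' : w' = PC wt)
    (hy : (1 / lam) • (wt - lam • F w' - y) ∈ B y)
    (hv : v = (1 / lam) • (wt - y))
    (hε : ε = L * ‖y - w'‖ ^ 2 / 4) :
    (∀ z : H, ⟪F z - F w', z - y⟫ ≥ -ε) ∧ v - F w' ∈ B y ∧
      lam • v + y - wt = 0 ∧ 2 * lam * ε ≤ σ ^ 2 * ‖y - wt‖ ^ 2 :=
  stmt17_general hL hcoco hdomB (hlam ▸ by positivity) hlam.le (hw' ▸ hPC wt) hy hv hε
end
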